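/- Let A be an n-by-n reciprocal matrix, let w be a positive n-vector efficient for A such that w_i/w_j ≠ a_ij for all i ≠ j (i.e., the matrix D(A,w) has no zero off-diagonal entries). Then there exists ε > 0 such that every positive n-vector w̃ with |w̃_i − w_i| < ε for all i is also efficient for A. -/

import Mathlib

/-- An n-by-n positive matrix is reciprocal if `A j i = 1 / A i j` for all `i, j`. -/
def Reciprocal {n : ℕ} (A : Matrix (Fin n) (Fin n) ℝ) : Prop :=
  (∀ i j, 0 < A i j) ∧ ∀ i j, A j i = 1 / A i j

/-- A positive vector `w` is efficient for a reciprocal matrix `A` if every positive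
vector `v` with `|v i / v j - A i j| ≤ |w i / w j - A i j|` entrywise is a positive
scalar multiple of `w`. -/
def Efficient {n : ℕ} (A : Matrix (Fin n) (Fin n) ℝ) (w : Fin n → ℝ) : Prop :=
  ∀ v : Fin n → ℝ, (∀ i, 0 < v i) →
    (∀ i j, |v i / v j - A i j| ≤ |w i / w j - A i j|) →
    ∃ c : ℝ, 0 < c ∧ v = fun i => c * w i

/-!
Write `u = v / w` entrywise. A pair `(k, l)` with `A k l < w k / w l` forces `u k ≤ u l` for every
`v` approximating `A` at least as well as `w`, and a pair `(l, k)` with `w l / w k < A l k` does the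
same. Join `k` to `l` in either case. If this digraph is strongly connected, then `u` is constant
and `w` is efficient. Conversely, if no edge leaves a set `S` of vertices and there are no ties,
then multiplying the entries of `w` in `S` by a common factor slightly above `1` loses nothing in
any entry, so efficiency forces strong connectivity. As the edges are defined by strict
inequalities, they survive small perturbations of `w`, and strong connectivity survives with them.
-/

open Filter Topology Relation Set

lemma eventually_mul_mem_Icc_nhdsGT_one {x a : ℝ} (hx : 0 ≤ x) (hxa : x < a) :
    ∀ᶠ t in 𝓝[>] (1 : ℝ), t * x ∈ Icc x a := by
  have hlim : Tendsto (fun t : ℝ => t * x) (𝓝 1) (𝓝 x) := by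
    simpa only [one_mul, id] using (tendsto_id (x := 𝓝 (1 : ℝ))).mul_const x
  filter_upwards [self_mem_nhdsWithin, nhdsWithin_le_nhds (hlim.eventually_lt_const hxa)]
    with t ht hta
  exact ⟨le_mul_of_one_le_left hx (mem_Ioi.mp ht).le, hta.le⟩

lemma eventually_div_mem_Icc_nhdsGT_one {x a : ℝ} (hx : 0 ≤ x) (hax : a < x) :
    ∀ᶠ t in 𝓝[>] (1 : ℝ), x / t ∈ Icc a x := by
  have hlim : Tendsto (fun t : ℝ => x / t) (𝓝 1) (𝓝 x) := by
    have := (tendsto_const_nhds (x := x)).div (tendsto_id (x := 𝓝 (1 : ℝ))) one_ne_zero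
    rwa [div_one] at this
  filter_upwards [self_mem_nhdsWithin, nhdsWithin_le_nhds (hlim.eventually_const_lt hax)]
    with t ht hat
  exact ⟨hat.le, div_le_self hx (mem_Ioi.mp ht).le⟩

section Perturbation

variable {n : ℕ} {A : Matrix (Fin n) (Fin n) ℝ} {w : Fin n → ℝ} {k l : Fin n}

/-- The edges `k → l` of the digraph of `A` and `w`, whose strong connectivity expresses efficiency
in the absence of ties. For reciprocal `A` and positive `w` the two alternatives are equivalent;
having both makes this characterization valid for an arbitrary matrix `A`. -/
def StrictEdge (A : Matrix (Fin n) (Fin n) ℝ) (w : Fin n → ℝ) (k l : Fin n) : Prop :=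
  A k l < w k / w l ∨ w l / w k < A l k

lemma StrictEdge.eventually_nhds (hk : w k ≠ 0) (hl : w l ≠ 0) (h : StrictEdge A w k l) :
    ∀ᶠ w' in 𝓝 w, StrictEdge A w' k l := by
  have tendsto_ratio (i j : Fin n) (hj : w j ≠ 0) :
      Tendsto (fun w' : Fin n → ℝ => w' i / w' j) (𝓝 w) (𝓝 (w i / w j)) :=
    ((continuous_apply i).tendsto w).div ((continuous_apply j).tendsto w) hj
  rcases h with h | h
  · exact ((tendsto_ratio k l hl).eventually_const_lt h).mono fun _ => Or.inl
  · exact ((tendsto_ratio l k hk).eventually_lt_const h).mono fun _ => Or.inr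

lemma StrictEdge.div_le_div {v : Fin n → ℝ} (h : StrictEdge A w k l)
    (hw : ∀ i, 0 < w i) (hv : ∀ i, 0 < v i)
    (hvw : ∀ i j, |v i / v j - A i j| ≤ |w i / w j - A i j|) :
    v k / w k ≤ v l / w l := by
  rw [div_le_div_iff₀ (hw k) (hw l)]
  rcases h with h | h
  · have hratio : v k / v l ≤ w k / w l := by
      have := (le_abs_self _).trans (hvw k l)
      rw [abs_of_pos (sub_pos.mpr h)] at this
      linarith
    rw [div_le_div_iff₀ (hv l) (hw l)] at hratio
    linarith
  · have hratio : w l / w k ≤ v l / v k := by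
      have := (neg_le_abs _).trans (hvw l k)
      rw [abs_of_neg (sub_neg.mpr h)] at this
      linarith
    rw [div_le_div_iff₀ (hw k) (hv k)] at hratio
    linarith

lemma efficient_of_reflTransGen_strictEdge (hw : ∀ i, 0 < w i)
    (hconn : ∀ i j, ReflTransGen (StrictEdge A w) i j) : Efficient A w := by
  intro v hv hvw
  have quotient_le (i j : Fin n) : v i / w i ≤ v j / w j := by
    induction hconn i j with
    | refl => exact le_rfl
    | tail _ hedge ih => exact ih.trans (hedge.div_le_div hw hv hvw)
  rcases isEmpty_or_nonempty (Fin n) with _ | ⟨⟨i₀⟩⟩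
  · exact ⟨1, one_pos, Subsingleton.elim _ _⟩
  · refine ⟨v i₀ / w i₀, div_pos (hv i₀) (hw i₀), funext fun i => ?_⟩
    rw [(quotient_le i₀ i).antisymm (quotient_le i i₀), div_mul_cancel₀ _ (hw i).ne']

lemma eventually_abs_piecewise_smul_div_sub_le (hw : ∀ i, 0 < w i)
    (hD : ∀ i j, i ≠ j → w i / w j ≠ A i j) {S : Set (Fin n)} [DecidablePred (· ∈ S)]
    (hS : ∀ i ∈ S, ∀ j ∉ S, ¬ StrictEdge A w i j) (k l : Fin n) :
    ∀ᶠ t in 𝓝[>] (1 : ℝ),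
      |S.piecewise (t • w) w k / S.piecewise (t • w) w l - A k l| ≤ |w k / w l - A k l| := by
  have hratio : 0 ≤ w k / w l := (div_pos (hw k) (hw l)).le
  by_cases hk : k ∈ S <;> by_cases hl : l ∈ S <;>
    simp only [hk, hl, piecewise_eq_of_mem, piecewise_eq_of_notMem, not_false_eq_true,
      Pi.smul_apply, smul_eq_mul]
  · filter_upwards [self_mem_nhdsWithin] with t ht
    rw [mul_div_mul_left _ _ (zero_lt_one.trans (mem_Ioi.mp ht)).ne']
  · have hlt : w k / w l < A k l :=
      (not_lt.mp fun h => hS k hk l hl (.inl h)).lt_of_ne (hD k l (ne_of_mem_of_not_mem hk hl))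
    filter_upwards [eventually_mul_mem_Icc_nhdsGT_one hratio hlt] with t ht
    rw [mul_div_assoc, abs_sub_comm, abs_sub_comm (w k / w l)]
    exact abs_sub_right_of_mem_uIcc (Icc_subset_uIcc ht)
  · have hlt : A k l < w k / w l :=
      (not_lt.mp fun h => hS l hl k hk (.inr h)).lt_of_ne'
        (hD k l (ne_of_mem_of_not_mem hl hk).symm)
    filter_upwards [eventually_div_mem_Icc_nhdsGT_one hratio hlt] with t ht
    rw [mul_comm t, ← div_div]
    exact abs_sub_left_of_mem_uIcc (Icc_subset_uIcc ht)
  · exact .of_forall fun _ => le_rfl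

lemma Efficient.exists_strictEdge_of_mem_of_notMem (hweff : Efficient A w) (hw : ∀ i, 0 < w i)
    (hD : ∀ i j, i ≠ j → w i / w j ≠ A i j) {S : Set (Fin n)} (hk : k ∈ S) (hl : l ∉ S) :
    ∃ i ∈ S, ∃ j ∉ S, StrictEdge A w i j := by
  classical
  by_contra! hS
  obtain ⟨t, hdom, ht⟩ := ((eventually_all.mpr fun i => eventually_all.mpr fun j =>
    eventually_abs_piecewise_smul_div_sub_le hw hD hS i j).and self_mem_nhdsWithin).exists
  have hpos (i : Fin n) : 0 < S.piecewise (t • w) w i := by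
    by_cases hi : i ∈ S <;> simp [hi, hw i, zero_lt_one.trans ht]
  obtain ⟨c, -, hc⟩ := hweff _ hpos hdom
  have htc : t = c := by simpa [hk, (hw k).ne'] using congrFun hc k
  have hc1 : c = 1 := by simpa [hl, (hw l).ne'] using congrFun hc l
  exact ht.ne' (htc.trans hc1)

lemma Efficient.reflTransGen_strictEdge (hweff : Efficient A w) (hw : ∀ i, 0 < w i)
    (hD : ∀ i j, i ≠ j → w i / w j ≠ A i j) (i j : Fin n) :
    ReflTransGen (StrictEdge A w) i j := by
  by_contra hij
  obtain ⟨k, hk, l, hl, hkl⟩ := hweff.exists_strictEdge_of_mem_of_notMem hw hD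
    (S := {m | ReflTransGen (StrictEdge A w) i m}) ReflTransGen.refl hij
  exact hl (hk.tail hkl)

theorem stmt_17_general (hw : ∀ i, 0 < w i) (hweff : Efficient A w)
    (hD : ∀ i j, i ≠ j → w i / w j ≠ A i j) : ∀ᶠ w' in 𝓝 w, Efficient A w' := by
  have hpos : ∀ᶠ w' in 𝓝 w, ∀ i, 0 < w' i := eventually_all.mpr fun i =>
    ((continuous_apply i).tendsto w).eventually_const_lt (hw i)
  have hedge : ∀ᶠ w' in 𝓝 w, ∀ i j, StrictEdge A w i j → StrictEdge A w' i j := by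
    simp only [eventually_all]
    exact fun i j => StrictEdge.eventually_nhds (hw i).ne' (hw j).ne'
  filter_upwards [hpos, hedge] with w' hw' hww'
  exact efficient_of_reflTransGen_strictEdge hw' fun i j =>
    ReflTransGen.mono hww' i j (hweff.reflTransGen_strictEdge hw hD i j)

end Perturbation

/-- If `w` is efficient for `A` and `D(A,w)` has no zero off-diagonal entries, then
every sufficiently small positive perturbation of `w` is also efficient for `A`. -/
theorem stmt_17 {n : ℕ} (A : Matrix (Fin n) (Fin n) ℝ) (hA : Reciprocal A)
    (w : Fin n → ℝ) (hw : ∀ i, 0 < w i) (hweff : Efficient A w)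
    (hD : ∀ i j, i ≠ j → w i / w j ≠ A i j) :
    ∃ ε : ℝ, 0 < ε ∧ ∀ w' : Fin n → ℝ, (∀ i, 0 < w' i) →
      (∀ i, |w' i - w i| < ε) → Efficient A w' := by
  obtain ⟨ε, hε, hball⟩ := Metric.eventually_nhds_iff.mp (stmt_17_general hw hweff hD)
  exact ⟨ε, hε, fun w' _ hw' => hball ((dist_pi_lt_iff hε).mpr hw')⟩
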